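/- Let (A,m) be a multiarrangement in V = K^ℓ and X ∈ L(A). Define ψ_X(A,m;t,1) = Σ_{Y ∈ L, Y ≤ X} μ(Y,X)·ψ(A_Y,m_Y;−t,1), where μ is the Möbius function of the lattice L(A). Then ψ_X(A,m;t,1) = C_{r(X)}(X)·t^{dim X}; that is, ψ_X(A,m;t,1) is a monomial in t of degree dim X whose coefficient is C_{r(X)}(X). -/

import Mathlib

/-!
Write `u = t(q - 1) - 1`. The argument combines two facts about `ψ(𝒜,m;t,q)`.

*Divisibility.* If every hyperplane of `𝒜` contains the subspace `Y`, then `ψ(𝒜,m;t,q)` is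
divisible by `t ^ dim Y`. For a vector `v ∈ Y` and a form `y` with `y(v) = 1`, contraction with
`y` is split by the exterior product with `∂_v`, so that `D^p` is, as a graded vector space, the
sum of the part of `D^p` and of `D^(p-1)` killed by contraction with `y` (`finrank_kerD_succ`).
Hence `v` contributes a factor `1 + u = t(q - 1)`, and iterating over a basis of `Y` gives
`psi_coeff_eq_zero`.

*Pole order.* For a set `B` of hyperplanes with intersection `Z`, the alternating sum of the
Hilbert series of `D^p` of all subarrangements of `B` has a pole of order at most `dim Z` at
`q = 1` (`boolDiff_hilb_pole`). Adding one hyperplane `H` to an arrangement shrinks `D^p` to a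
submodule, with quotient annihilated by a power of `α_H`. Taking kernels and cokernels
successively in all directions of the Boolean cube of subsets of `B`, the alternating sum becomes
a signed sum of Hilbert series of modules annihilated by powers of all `α_H`, `H ∈ B`
(`cube_pole`); for those the Hilbert–Serre theorem bounds the pole order (`hilbert_serre`).

By inversion on the Boolean lattice, the coefficient of `t ^ k` in `ψ(𝒜_Y,m_Y;t,q)` is the sum of
local contributions `c_{Z,k}(q)` over the `Z ∈ L` containing `Y` (`psi_restrictArr_coeff`). Since
the coefficient of `t ^ k` in `u ^ p` is divisible by `(1 - q) ^ k`, the pole order bound makes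
`c_{Z,k}` a polynomial for `k ≥ dim Z`, vanishing at `q = 1` if `k > dim Z`. For `k < dim Z` it
vanishes by Möbius inversion on `L` and divisibility. So at `q = 1` the subspace `Z` contributes
to the coefficient of `t ^ dim Z` only (`exists_local`), and Möbius inversion on `L` isolates the
contribution of `X`, a multiple of `t ^ dim X`. The same multiple is the coefficient of
`t ^ dim X` in `ψ(𝒜_X,m_X;t,1)`, as every other `Z` containing `X` has larger dimension; this
identifies it with `C_{r(X)}(X)` up to the sign coming from `t ↦ -t`.
-/

open MvPolynomial

noncomputable section

/-- The linear form (degree-one polynomial) associated to a linear functional on `K^ℓ`. -/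
def formPoly {K : Type*} [Field K] {ℓ : ℕ} (φ : Module.Dual K (Fin ℓ → K)) :
    MvPolynomial (Fin ℓ) K :=
  ∑ i : Fin ℓ, MvPolynomial.C (φ (Pi.single i 1)) * MvPolynomial.X i

/-- A multiarrangement of hyperplanes in `K^ℓ`: a finite set of (pairwise distinct)
hyperplanes, recorded by nonzero defining linear functionals with pairwise distinct
kernels, together with a positive multiplicity attached to each hyperplane. -/
structure MultiArr (K : Type*) [Field K] (ℓ : ℕ) where
  duals : Finset (Module.Dual K (Fin ℓ → K))
  ne_zero : ∀ φ ∈ duals, φ ≠ 0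
  distinct_ker : ∀ φ ∈ duals, ∀ ψ ∈ duals, φ ≠ ψ → LinearMap.ker φ ≠ LinearMap.ker ψ
  mult : Module.Dual K (Fin ℓ → K) → ℕ
  mult_pos : ∀ φ ∈ duals, 0 < mult φ

variable {K : Type*} [Field K] {ℓ : ℕ}

/-- `Der^p(S)`-condition: an alternating `p`-multilinear map is a `K`-derivation in each
variable. -/
def IsMultiDer {p : ℕ}
    (θ : (MvPolynomial (Fin ℓ) K) [⋀^Fin p]→ₗ[K] (MvPolynomial (Fin ℓ) K)) : Prop :=
  ∀ (i : Fin p) (v : Fin p → MvPolynomial (Fin ℓ) K) (f g : MvPolynomial (Fin ℓ) K),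
    θ (Function.update v i (f * g)) =
      f * θ (Function.update v i g) + g * θ (Function.update v i f)

/-- The module of `p`-derivations `D^p(𝒜,m)` of a multiarrangement, as a submodule of the
alternating `p`-multilinear maps (for `p = 0` this is all of `S ≅ Der^0(S)`). -/
def Dp (A : MultiArr K ℓ) (p : ℕ) :
    Submodule (MvPolynomial (Fin ℓ) K)
      ((MvPolynomial (Fin ℓ) K) [⋀^Fin p]→ₗ[K] (MvPolynomial (Fin ℓ) K)) where
  carrier := {θ | IsMultiDer θ ∧ ∀ φ ∈ A.duals, ∀ v : Fin p → MvPolynomial (Fin ℓ) K,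
    ∀ i : Fin p, v i = formPoly φ → θ v ∈ Ideal.span {formPoly φ ^ A.mult φ}}
  add_mem' := by
    rintro θ η ⟨hθ, hθ'⟩ ⟨hη, hη'⟩
    refine ⟨fun i v f g => ?_, fun φ hφ v i hv => ?_⟩
    · simp only [AlternatingMap.add_apply, hθ i v f g, hη i v f g]; ring
    · simpa using add_mem (hθ' φ hφ v i hv) (hη' φ hφ v i hv)
  zero_mem' := by
    refine ⟨fun i v f g => by simp, fun φ hφ v i hv => by simp⟩
  smul_mem' := by
    rintro c θ ⟨hθ, hθ'⟩
    refine ⟨fun i v f g => ?_, fun φ hφ v i hv => ?_⟩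
    · simp only [AlternatingMap.smul_apply, smul_eq_mul, hθ i v f g]; ring
    · simpa using Ideal.mul_mem_left _ c (hθ' φ hφ v i hv)

attribute [local instance] Classical.propDecidable

/-- The subarrangement `(𝒜_X, m_X)`, consisting of the hyperplanes of `𝒜` containing `X`,
with the restricted multiplicity. -/
def restrictArr (A : MultiArr K ℓ) (X : Submodule K (Fin ℓ → K)) : MultiArr K ℓ where
  duals := A.duals.filter (fun φ => X ≤ LinearMap.ker φ)
  ne_zero := fun φ hφ => A.ne_zero φ (Finset.mem_filter.mp hφ).1
  distinct_ker := fun φ hφ ψ hψ =>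
    A.distinct_ker φ (Finset.mem_filter.mp hφ).1 ψ (Finset.mem_filter.mp hψ).1
  mult := A.mult
  mult_pos := fun φ hφ => A.mult_pos φ (Finset.mem_filter.mp hφ).1

/-- The intersection lattice `L(𝒜)`: all intersections of subsets of `𝒜`
(with `V` itself as the empty intersection). -/
def LSet (A : MultiArr K ℓ) : Finset (Submodule K (Fin ℓ → K)) :=
  A.duals.powerset.image fun B => ⨅ φ ∈ B, LinearMap.ker φ

/-- The rank `r(X) = codim_V X` of a subspace `X ⊆ V = K^ℓ`. -/
def rk {K : Type*} [Field K] {ℓ : ℕ} (X : Submodule K (Fin ℓ → K)) : ℕ :=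
  ℓ - Module.finrank K X

/-- A `p`-derivation is homogeneous of (polynomial) degree `d` if all the values
`θ(x_{i_1},…,x_{i_p})` are homogeneous polynomials of degree `d`. -/
def AltHomog {p : ℕ}
    (θ : (MvPolynomial (Fin ℓ) K) [⋀^Fin p]→ₗ[K] (MvPolynomial (Fin ℓ) K)) (d : ℕ) : Prop :=
  ∀ v : Fin p → Fin ℓ, (θ fun j => MvPolynomial.X (v j)).IsHomogeneous d

/-- The degree-`d` graded component of `D^p(𝒜,m)`, as a `K`-subspace. -/
def DpGraded (A : MultiArr K ℓ) (p d : ℕ) :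
    Submodule K ((MvPolynomial (Fin ℓ) K) [⋀^Fin p]→ₗ[K] (MvPolynomial (Fin ℓ) K)) where
  carrier := {θ | θ ∈ Dp A p ∧ AltHomog θ d}
  add_mem' := fun ha hb =>
    ⟨add_mem ha.1 hb.1, fun v => by
      simpa using (ha.2 v).add (hb.2 v)⟩
  zero_mem' := ⟨zero_mem _, fun v => by
    simpa using MvPolynomial.isHomogeneous_zero _ _ d⟩
  smul_mem' := fun c θ hθ => by
    refine ⟨?_, fun v => ?_⟩
    · have : c • θ = (MvPolynomial.C c : MvPolynomial (Fin ℓ) K) • θ := by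
        ext v
        simp [MvPolynomial.smul_eq_C_mul]
      rw [this]
      exact Submodule.smul_mem _ _ hθ.1
    · have : (c • θ) (fun j => MvPolynomial.X (v j)) =
        MvPolynomial.C c * θ (fun j => MvPolynomial.X (v j)) := by
        simp [MvPolynomial.smul_eq_C_mul]
      rw [this]
      simpa using (MvPolynomial.isHomogeneous_C _ c).mul (hθ.2 v)

/-- The Hilbert series `H(D^p(𝒜,m), q) = Σ_d dim_K D^p(𝒜,m)_d qᵈ`. -/
def hilb (A : MultiArr K ℓ) (p : ℕ) : PowerSeries ℤ :=
  PowerSeries.mk fun d => (Module.finrank K (DpGraded A p d) : ℤ)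

/-- `ψ(𝒜,m;t,q) = Σ_{p=0}^{ℓ} H(D^p(𝒜,m),q)·(t(q−1)−1)^p`, as a polynomial in `t` with
power-series (in `q`) coefficients. -/
def psi (A : MultiArr K ℓ) : Polynomial (PowerSeries ℤ) :=
  ∑ p ∈ Finset.range (ℓ + 1), Polynomial.C (hilb A p) *
    (Polynomial.C ((PowerSeries.X : PowerSeries ℤ) - 1) * Polynomial.X - 1) ^ p

/-- The coefficient of `t^k` in `ψ(𝒜,m;t,q)`, expressed as a polynomial in `q`
(this is possible by Theorem `chithm`; junk value `0` otherwise). -/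
def psiQCoeff (A : MultiArr K ℓ) (k : ℕ) : Polynomial ℤ :=
  if h : ∃ f : Polynomial ℤ, Polynomial.coeToPowerSeries.ringHom f = (psi A).coeff k then
    h.choose else 0

/-- The coefficient of `t^k` in `ψ(𝒜,m;t,1)`. -/
def psiAtOne (A : MultiArr K ℓ) (k : ℕ) : ℤ := (psiQCoeff A k).eval 1

/-- `ψ(𝒜,m;t,1)` as a polynomial in `t`. -/
def psiT1Poly (A : MultiArr K ℓ) : Polynomial ℤ :=
  ∑ k ∈ Finset.range (ℓ + 1), Polynomial.C (psiAtOne A k) * Polynomial.X ^ k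

/-- The characteristic polynomial `χ((𝒜,m),t) = (−1)^ℓ ψ(𝒜,m;t,1)`. -/
def charPoly (A : MultiArr K ℓ) : Polynomial ℤ := (-1 : ℤ) ^ ℓ • psiT1Poly A

/-- `C_p`, the coefficient of `t^p` in the Poincaré polynomial
`π((𝒜,m),t) = (−t)^ℓ χ((𝒜,m),−t^{−1})`. -/
def CpCoeff (A : MultiArr K ℓ) (p : ℕ) : ℤ := (-1 : ℤ) ^ (ℓ - p) * psiAtOne A (ℓ - p)

/-- The Poincaré polynomial `π((𝒜,m),t) = (−t)^ℓ χ((𝒜,m),−t^{−1})`. -/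
def poinPoly (A : MultiArr K ℓ) : Polynomial ℤ :=
  ∑ p ∈ Finset.range (ℓ + 1), Polynomial.C (CpCoeff A p) * Polynomial.X ^ p

/-! ### Graded submodules of free modules and their Hilbert series -/

/-- A graded `S`-submodule of the free module `S^ι`, given by its graded pieces: the
piece of degree `d` consists of vectors of forms of degree `d`, and multiplication by each
variable sends the piece of degree `d` into the piece of degree `d + 1`. -/
structure IsGr {ι : Type*} (U : ℕ → Submodule K (ι → MvPolynomial (Fin ℓ) K)) : Prop where
  homog : ∀ d, ∀ w ∈ U d, ∀ i, (w i).IsHomogeneous d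
  step : ∀ d, ∀ w ∈ U d, ∀ j, (X j : MvPolynomial (Fin ℓ) K) • w ∈ U (d + 1)

/-- The Hilbert series of a graded family of subspaces. -/
def HF {ι : Type*} (U : ℕ → Submodule K (ι → MvPolynomial (Fin ℓ) K)) : PowerSeries ℤ :=
  PowerSeries.mk fun d => (Module.finrank K (U d) : ℤ)

/-- A power of the linear form `φ` multiplies `P` into `Q`. -/
def Nil {ι : Type*} (φ : Module.Dual K (Fin ℓ → K))
    (P Q : ℕ → Submodule K (ι → MvPolynomial (Fin ℓ) K)) : Prop :=
  ∃ n, ∀ d, ∀ w ∈ P d, formPoly φ ^ n • w ∈ Q (d + n)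

/-- The power series with a pole of order at most `r` at `q = 1`: those `f` for which
`(1 - q) ^ r * f` is a polynomial. -/
def PoleLE (r : ℕ) (f : PowerSeries ℤ) : Prop :=
  ∃ P : Polynomial ℤ, (1 - PowerSeries.X) ^ r * f = (P : PowerSeries ℤ)

lemma PoleLE.add {r : ℕ} {f g : PowerSeries ℤ} (hf : PoleLE r f) (hg : PoleLE r g) :
    PoleLE r (f + g) := by
  obtain ⟨P, hP⟩ := hf
  obtain ⟨Q, hQ⟩ := hg
  exact ⟨P + Q, by rw [mul_add, hP, hQ, Polynomial.coe_add]⟩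

lemma PoleLE.sub {r : ℕ} {f g : PowerSeries ℤ} (hf : PoleLE r f) (hg : PoleLE r g) :
    PoleLE r (f - g) := by
  obtain ⟨P, hP⟩ := hf
  obtain ⟨Q, hQ⟩ := hg
  exact ⟨P - Q, by rw [mul_sub, hP, hQ, Polynomial.coe_sub]⟩

lemma PoleLE.poly_mul {r : ℕ} {f : PowerSeries ℤ} (p : Polynomial ℤ) (hf : PoleLE r f) :
    PoleLE r ((p : PowerSeries ℤ) * f) := by
  obtain ⟨P, hP⟩ := hf
  exact ⟨p * P, by rw [Polynomial.coe_mul, ← hP]; ring⟩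

lemma PoleLE.sum {r : ℕ} {α : Type*} {s : Finset α} {f : α → PowerSeries ℤ}
    (h : ∀ a ∈ s, PoleLE r (f a)) : PoleLE r (∑ a ∈ s, f a) := by
  classical
  induction s using Finset.induction_on with
  | empty => exact ⟨0, by simp⟩
  | insert a s ha ih =>
    rw [Finset.sum_insert ha]
    exact (h a (by simp)).add (ih fun b hb => h b (by simp [hb]))

lemma formPoly_isHomogeneous (φ : Module.Dual K (Fin ℓ → K)) :
    (formPoly φ).IsHomogeneous 1 := by
  refine IsHomogeneous.sum _ _ _ fun i _ => ?_
  simpa using (isHomogeneous_C (Fin ℓ) _).mul (isHomogeneous_X K i)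

lemma formPoly_add (φ ψ : Module.Dual K (Fin ℓ → K)) :
    formPoly (φ + ψ) = formPoly φ + formPoly ψ := by
  simp [formPoly, add_mul, Finset.sum_add_distrib]

lemma formPoly_smul (c : K) (φ : Module.Dual K (Fin ℓ → K)) :
    formPoly (c • φ) = C c * formPoly φ := by
  simp [formPoly, Finset.mul_sum, mul_assoc]

lemma formPoly_proj (i : Fin ℓ) :
    formPoly (LinearMap.proj i : (Fin ℓ → K) →ₗ[K] K) = X i := by
  simp [formPoly, Pi.single_apply, Finset.sum_ite_eq]

section Graded

variable {ι : Type*} {U W : ℕ → Submodule K (ι → MvPolynomial (Fin ℓ) K)}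

lemma IsGr.smul_monomial (h : IsGr U) (m : Fin ℓ →₀ ℕ) {d : ℕ} {w} (hw : w ∈ U d) :
    monomial m (1 : K) • w ∈ U (d + m.degree) := by
  classical
  have hX : ∀ (j : Fin ℓ) (n d : ℕ) (w), w ∈ U d →
      (X j : MvPolynomial (Fin ℓ) K) ^ n • w ∈ U (d + n) := by
    intro j n
    induction n with
    | zero => intro d w hw; simpa using hw
    | succ n ih =>
      intro d w hw
      rw [pow_succ', mul_smul]
      exact h.step _ _ (ih d w hw) j
  have key : ∀ t : Finset (Fin ℓ),
      (∏ i ∈ t, (X i : MvPolynomial (Fin ℓ) K) ^ m i) • w ∈ U (d + ∑ i ∈ t, m i) := by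
    intro t
    induction t using Finset.induction_on with
    | empty => simpa using hw
    | insert a t ha ih =>
      rw [Finset.prod_insert ha, Finset.sum_insert ha, mul_smul, add_comm (m a), ← add_assoc]
      exact hX a (m a) _ _ ih
  rw [monomial_eq, map_one, one_mul]
  exact key m.support

lemma IsGr.smul (h : IsGr U) {s : MvPolynomial (Fin ℓ) K} {e : ℕ} (hs : s.IsHomogeneous e)
    {d : ℕ} {w} (hw : w ∈ U d) : s • w ∈ U (d + e) := by
  rw [s.as_sum, Finset.sum_smul]
  refine Submodule.sum_mem _ fun m hm => ?_
  have : monomial m (coeff m s) • w = coeff m s • (monomial m (1 : K) • w) := by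
    rw [← smul_assoc, MvPolynomial.smul_monomial, smul_eq_mul, mul_one]
  rw [this]
  have he : m.degree = e := by
    by_contra hne
    exact mem_support_iff.mp hm (hs.coeff_eq_zero hne)
  rw [← he]
  exact Submodule.smul_mem _ _ (h.smul_monomial m hw)

lemma IsGr.sup (hU : IsGr U) (hW : IsGr W) : IsGr (U ⊔ W) where
  homog d w hw i := by
    obtain ⟨u, hu, v, hv, rfl⟩ := Submodule.mem_sup.mp hw
    exact (hU.homog d u hu i).add (hW.homog d v hv i)
  step d w hw j := by
    obtain ⟨u, hu, v, hv, rfl⟩ := Submodule.mem_sup.mp hw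
    rw [smul_add]
    exact Submodule.add_mem_sup (hU.step d u hu j) (hW.step d v hv j)

lemma IsGr.inf (hU : IsGr U) (hW : IsGr W) : IsGr (U ⊓ W) where
  homog d w hw i := hU.homog d w hw.1 i
  step d w hw j := ⟨hU.step d w hw.1 j, hW.step d w hw.2 j⟩

lemma IsGr.finiteDimensional [Finite ι] (h : IsGr U) (d : ℕ) : FiniteDimensional K (U d) := by
  have hle : ∀ w : U d, ∀ i, (w : ι → MvPolynomial (Fin ℓ) K) i ∈
      restrictTotalDegree (Fin ℓ) K d := fun w i =>
    (mem_restrictTotalDegree _ _ _).2 (h.homog d w w.2 i).totalDegree_le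
  let f : U d →ₗ[K] (ι → restrictTotalDegree (Fin ℓ) K d) :=
    LinearMap.pi fun i => ((LinearMap.proj i).comp (U d).subtype).codRestrict _ (hle · i)
  refine Module.Finite.of_injective f fun a b hab => Subtype.ext (funext fun i => ?_)
  exact congrArg Subtype.val (congrFun hab i)

lemma finrank_map_add {E F : Type*} [AddCommGroup E] [Module K E] [AddCommGroup F] [Module K F]
    (g : E →ₗ[K] F) (P : Submodule K E) [FiniteDimensional K P] :
    Module.finrank K (P.map g) + Module.finrank K (P ⊓ LinearMap.ker g : Submodule K E) =
      Module.finrank K P := by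
  have h := LinearMap.finrank_range_add_finrank_ker (g.domRestrict P)
  have h1 : LinearMap.range (g.domRestrict P) = P.map g := LinearMap.range_domRestrict P g
  have h2 : (LinearMap.ker (g.domRestrict P)).map P.subtype = P ⊓ LinearMap.ker g := by
    ext x
    simp [LinearMap.mem_ker, and_comm]
  rwa [h1, ← Submodule.finrank_map_subtype_eq, h2] at h

end Graded

/-! ### Vanishing of graded modules in large degrees -/

section Base

variable {ι : Type*} {U W : ℕ → Submodule K (ι → MvPolynomial (Fin ℓ) K)}

lemma homogeneousComponent_mul_of_isHomogeneous (s : MvPolynomial (Fin ℓ) K)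
    {t : MvPolynomial (Fin ℓ) K} {e : ℕ} (ht : t.IsHomogeneous e) (d : ℕ) :
    homogeneousComponent d (s * t) =
      if e ≤ d then homogeneousComponent (d - e) s * t else 0 := by
  have h1 : ∀ a, homogeneousComponent d (homogeneousComponent a s * t) =
      if a + e = d then homogeneousComponent a s * t else 0 := fun a => by
    rw [homogeneousComponent_of_mem
      (((homogeneousComponent_isHomogeneous a s).mul ht))]
    simp only [eq_comm]
  conv_lhs => rw [← sum_homogeneousComponent s, Finset.sum_mul, map_sum]
  simp only [h1]
  split_ifs with h
  · rw [Finset.sum_eq_single (d - e)]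
    · simp [h]
    · intro a _ ha
      rw [if_neg (by omega)]
    · intro hn
      have hn' : s.totalDegree + e < d := by simpa using hn
      rw [homogeneousComponent_eq_zero _ _ (by omega)]
      simp
  · exact Finset.sum_eq_zero fun a _ => if_neg (by omega)

/-- An element of the `S`-span of a graded family which is homogeneous of degree `d` lies in
the piece of degree `d`. -/
lemma IsGr.mem_of_mem_span (hU : IsGr U) {w : ι → MvPolynomial (Fin ℓ) K} {d : ℕ}
    (hw : w ∈ Submodule.span (MvPolynomial (Fin ℓ) K) (⋃ d, (U d : Set _)))
    (hd : ∀ i, (w i).IsHomogeneous d) : w ∈ U d := by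
  have key : ∀ s : MvPolynomial (Fin ℓ) K,
      (fun i => homogeneousComponent d (s * w i)) ∈ U d := by
    clear hd
    induction hw using Submodule.span_induction with
    | mem w hw =>
      intro s
      obtain ⟨e, he⟩ := Set.mem_iUnion.mp hw
      simp only [homogeneousComponent_mul_of_isHomogeneous s (hU.homog e w he _)]
      by_cases h : e ≤ d
      · simp only [h, if_true]
        have := hU.smul (homogeneousComponent_isHomogeneous (d - e) s) he
        rwa [Nat.add_sub_cancel' h] at this
      · simp only [h, if_false]
        exact (U d).zero_mem
    | zero => intro s; simp only [Pi.zero_apply, mul_zero, map_zero]; exact (U d).zero_mem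
    | add x y _ _ hx hy =>
      intro s
      simp only [Pi.add_apply, mul_add, map_add]
      exact (U d).add_mem (hx s) (hy s)
    | smul a x _ hx =>
      intro s
      simp only [Pi.smul_apply, smul_eq_mul, ← mul_assoc]
      exact hx (s * a)
  have h1 := key 1
  simp only [one_mul] at h1
  convert h1 using 2 with i
  exact (homogeneousComponent_eq_self (hd _)).symm

/-- A finitely generated graded module annihilated by powers of forms spanning the dual space
vanishes in large degrees. -/
lemma eventually_le [Finite ι] (hU : IsGr U) (hW : IsGr W)
    {B : Set (Module.Dual K (Fin ℓ → K))} (hB : Submodule.span K B = ⊤)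
    (hnil : ∀ φ ∈ B, Nil φ W U) : ∃ D, ∀ d ≥ D, W d ≤ U d := by
  set S := MvPolynomial (Fin ℓ) K with hS
  let U' : Submodule S (ι → S) := Submodule.span S (⋃ d, (U d : Set _))
  let W' : Submodule S (ι → S) := Submodule.span S (⋃ d, (W d : Set _))
  let I : Ideal S :=
    { carrier := {s | ∀ w ∈ W', s • w ∈ U'}
      add_mem' := fun ha hb w hw => by
        rw [add_smul]; exact U'.add_mem (ha w hw) (hb w hw)
      zero_mem' := fun w _ => by simp
      smul_mem' := fun c s hs w hw => by
        rw [smul_assoc]; exact U'.smul_mem _ (hs w hw) }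
  have hI : ∀ φ : Module.Dual K (Fin ℓ → K), formPoly φ ∈ I.radical := by
    intro φ
    have hφ : φ ∈ Submodule.span K B := hB ▸ Submodule.mem_top
    induction hφ using Submodule.span_induction with
    | mem φ hφ =>
      obtain ⟨n, hn⟩ := hnil φ hφ
      refine ⟨n, fun w hw => ?_⟩
      induction hw using Submodule.span_induction with
      | mem w hw =>
        obtain ⟨d, hd⟩ := Set.mem_iUnion.mp hw
        exact Submodule.subset_span (Set.mem_iUnion.mpr ⟨d + n, hn d w hd⟩)
      | zero => simp
      | add x y _ _ hx hy => rw [smul_add]; exact U'.add_mem hx hy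
      | smul a x _ hx => rw [smul_comm]; exact U'.smul_mem _ hx
    | zero => simp [formPoly]
    | add x y _ _ hx hy => rw [formPoly_add]; exact I.radical.add_mem hx hy
    | smul a x _ hx => rw [formPoly_smul]; exact I.radical.mul_mem_left _ hx
  have hvars : idealOfVars (Fin ℓ) K ≤ I.radical := by
    rw [idealOfVars, Ideal.span_le]
    rintro _ ⟨i, rfl⟩
    rw [SetLike.mem_coe, ← formPoly_proj]
    exact hI _
  obtain ⟨N, hN⟩ := Ideal.exists_pow_le_of_le_radical_of_fg hvars (idealOfVars_fg _ _)
  -- By noetherianity `W` is generated in degrees at most `D`, and forms of degree at least `N`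
  -- multiply `W` into `U`.
  let T : ℕ →o Submodule S (ι → S) :=
    ⟨fun n => Submodule.span S (⋃ d ≤ n, (W d : Set _)), fun a b hab =>
      Submodule.span_mono (Set.biUnion_subset_biUnion_left fun d hd => le_trans hd hab)⟩
  obtain ⟨D, hD⟩ := monotone_stabilizes_iff_noetherian.mpr
    (inferInstance : IsNoetherian S (ι → S)) T
  refine ⟨D + N, fun d hd w hw => ?_⟩
  have hwT : w ∈ T D := by
    rw [hD d (by omega)]
    exact Submodule.subset_span (Set.mem_biUnion (x := d) (le_refl d) hw)
  have hwU : ∀ s : S, (fun i => homogeneousComponent d (s * w i)) ∈ U' := by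
    clear hw
    induction hwT using Submodule.span_induction with
    | mem w hw =>
      intro s
      simp only [Set.mem_iUnion] at hw
      obtain ⟨e, heD, he⟩ := hw
      simp only [homogeneousComponent_mul_of_isHomogeneous s (hW.homog e w he _),
        if_pos (show e ≤ d by omega)]
      refine hN ?_ w (Submodule.subset_span (Set.mem_iUnion.mpr ⟨e, he⟩))
      rw [mem_pow_idealOfVars_iff]
      intro x hx
      have : x.degree = d - e := by
        by_contra hne
        exact mem_support_iff.mp hx
          ((homogeneousComponent_isHomogeneous (d - e) s).coeff_eq_zero hne)
      omega
    | zero => intro s; simp only [Pi.zero_apply, mul_zero, map_zero]; exact U'.zero_mem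
    | add x y _ _ hx hy =>
      intro s
      simp only [Pi.add_apply, mul_add, map_add]
      exact U'.add_mem (hx s) (hy s)
    | smul a x _ hx =>
      intro s
      simp only [Pi.smul_apply, smul_eq_mul, ← mul_assoc]
      exact hx (s * a)
  refine hU.mem_of_mem_span ?_ (hW.homog d w hw)
  have h1 := hwU 1
  simp only [one_mul] at h1
  convert h1 using 2 with i
  exact (homogeneousComponent_eq_self (hW.homog d w hw _)).symm

end Base

/-! ### The Hilbert–Serre pole bound -/

section HilbertSerre

variable {ι : Type*} {U W : ℕ → Submodule K (ι → MvPolynomial (Fin ℓ) K)}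

/-- Multiplication by the linear form `φ` as a `K`-linear map. -/
def mulForm (φ : Module.Dual K (Fin ℓ → K)) :
    (ι → MvPolynomial (Fin ℓ) K) →ₗ[K] (ι → MvPolynomial (Fin ℓ) K) :=
  Algebra.lsmul K K (ι → MvPolynomial (Fin ℓ) K) (formPoly φ)

lemma mulForm_apply (φ : Module.Dual K (Fin ℓ → K)) (w : ι → MvPolynomial (Fin ℓ) K) :
    mulForm φ w = formPoly φ • w := rfl

/-- The graded submodule `φ W`. -/
def shiftFam (φ : Module.Dual K (Fin ℓ → K))
    (W : ℕ → Submodule K (ι → MvPolynomial (Fin ℓ) K)) :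
    ℕ → Submodule K (ι → MvPolynomial (Fin ℓ) K)
  | 0 => ⊥
  | d + 1 => (W d).map (mulForm φ)

/-- The graded submodule `{w ∈ W | φ w ∈ U}`. -/
def colonFam (φ : Module.Dual K (Fin ℓ → K))
    (W U : ℕ → Submodule K (ι → MvPolynomial (Fin ℓ) K)) :
    ℕ → Submodule K (ι → MvPolynomial (Fin ℓ) K) :=
  fun d => W d ⊓ (U (d + 1)).comap (mulForm φ)

lemma IsGr.smul_formPoly (hU : IsGr U) (φ : Module.Dual K (Fin ℓ → K)) {d : ℕ} {w}
    (hw : w ∈ U d) : formPoly φ • w ∈ U (d + 1) :=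
  hU.smul (formPoly_isHomogeneous φ) hw

lemma IsGr.smul_formPoly_pow (hU : IsGr U) (φ : Module.Dual K (Fin ℓ → K)) (n : ℕ) {d : ℕ} {w}
    (hw : w ∈ U d) : formPoly φ ^ n • w ∈ U (d + n) :=
  hU.smul (by simpa using (formPoly_isHomogeneous φ).pow n) hw

lemma IsGr.shiftFam (hW : IsGr W) (φ : Module.Dual K (Fin ℓ → K)) :
    IsGr (shiftFam φ W) where
  homog d w hw i := by
    cases d with
    | zero =>
      obtain rfl : w = 0 := hw
      exact isHomogeneous_zero _ _ _
    | succ d =>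
      obtain ⟨w, hw, rfl⟩ := hw
      exact hW.homog _ _ (hW.smul_formPoly φ hw) i
  step d w hw j := by
    cases d with
    | zero =>
      obtain rfl : w = 0 := hw
      rw [smul_zero]
      exact Submodule.zero_mem _
    | succ d =>
      obtain ⟨w, hw, rfl⟩ := hw
      exact ⟨_, hW.step _ _ hw j, smul_comm _ _ _⟩

lemma IsGr.colonFam (hW : IsGr W) (hU : IsGr U) (φ : Module.Dual K (Fin ℓ → K)) :
    IsGr (colonFam φ W U) where
  homog d w hw i := hW.homog d w hw.1 i
  step d w hw j := by
    refine ⟨hW.step _ _ hw.1 j, ?_⟩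
    have h := hU.step _ _ hw.2 j
    rw [mulForm_apply, smul_comm] at h
    exact h

lemma finrank_colonFam [Finite ι] (hW : IsGr W) (hU : IsGr U)
    (φ : Module.Dual K (Fin ℓ → K)) (d : ℕ) :
    Module.finrank K ((shiftFam φ W ⊔ U) (d + 1)) + Module.finrank K (colonFam φ W U d) =
      Module.finrank K (U (d + 1)) + Module.finrank K (W d) := by
  have := hW.finiteDimensional d
  have := ((hW.shiftFam φ).sup hU).finiteDimensional (d + 1)
  have h1 := finrank_map_add ((U (d + 1)).mkQ ∘ₗ mulForm φ) (W d)
  have h2 := finrank_map_add (U (d + 1)).mkQ ((shiftFam φ W ⊔ U) (d + 1))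
  have e1 : LinearMap.ker ((U (d + 1)).mkQ ∘ₗ mulForm φ) =
      (U (d + 1)).comap (mulForm φ) := by
    rw [LinearMap.ker_comp, Submodule.ker_mkQ]
  have e2 : ((shiftFam φ W ⊔ U) (d + 1)).map (U (d + 1)).mkQ =
      (W d).map ((U (d + 1)).mkQ ∘ₗ mulForm φ) := by
    rw [Submodule.map_comp, Pi.sup_apply, Submodule.map_sup, Submodule.mkQ_map_self, sup_bot_eq]
    rfl
  have e3 : (shiftFam φ W ⊔ U) (d + 1) ⊓ LinearMap.ker (U (d + 1)).mkQ = U (d + 1) := by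
    rw [Submodule.ker_mkQ]
    exact inf_eq_right.mpr le_sup_right
  rw [e1] at h1
  rw [e2, e3] at h2
  rw [show colonFam φ W U d = W d ⊓ (U (d + 1)).comap (mulForm φ) from rfl]
  omega

lemma Nil.mono {φ : Module.Dual K (Fin ℓ → K)}
    {P Q P' Q' : ℕ → Submodule K (ι → MvPolynomial (Fin ℓ) K)} (h : Nil φ P Q)
    (hP : P' ≤ P) (hQ : Q ≤ Q') : Nil φ P' Q' := by
  obtain ⟨n, hn⟩ := h
  exact ⟨n, fun d w hw => hQ _ (hn d w (hP _ hw))⟩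

/-- Hilbert–Serre: if powers of the forms in `B` annihilate `W / U`, and `B` together with `r`
further forms spans the dual space, then the Hilbert series of `W / U` has a pole of order at
most `r` at `q = 1`. The induction uses the exact sequence of multiplication by one of the
further forms. -/
lemma hilbert_serre [Finite ι] (ys : List (Module.Dual K (Fin ℓ → K))) :
    ∀ (B : Set (Module.Dual K (Fin ℓ → K)))
      (W U : ℕ → Submodule K (ι → MvPolynomial (Fin ℓ) K)), IsGr W → IsGr U → U ≤ W →
      Submodule.span K (B ∪ {y | y ∈ ys}) = ⊤ → (∀ φ ∈ B, Nil φ W U) →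
      PoleLE ys.length (HF W - HF U) := by
  induction ys with
  | nil =>
    intro B W U hW hU hUW hB hnil
    obtain ⟨D, hD⟩ := eventually_le hU hW (by simpa using hB) hnil
    refine ⟨PowerSeries.trunc D (HF W - HF U), ?_⟩
    ext d
    rw [Polynomial.coeff_coe, PowerSeries.coeff_trunc]
    split_ifs with h
    · simp
    · have : Module.finrank K (W d) = Module.finrank K (U d) :=
        congrArg (fun P : Submodule K _ => Module.finrank K P)
          (le_antisymm (hD d (by omega)) (hUW d))
      simp [HF, this]
  | cons y ys ih =>
    intro B W U hW hU hUW hB hnil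
    have hB' : Submodule.span K (insert y B ∪ {z | z ∈ ys}) = ⊤ := by
      rw [← hB]
      congr 1
      ext z
      simp only [Set.mem_union, Set.mem_insert_iff, Set.mem_ofPred_eq, List.mem_cons]
      tauto
    have hC := (hW.shiftFam y).sup hU
    have hK := hW.colonFam hU y
    have i1 := ih (insert y B) W (shiftFam y W ⊔ U) hW hC
      (sup_le (fun d => by
        cases d with
        | zero => exact bot_le
        | succ d =>
          rintro _ ⟨w, hw, rfl⟩
          exact hW.smul_formPoly y hw) hUW) hB'
      (by
        rintro φ (rfl | hφ)
        · refine ⟨1, fun d w hw => ?_⟩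
          rw [pow_one]
          exact Submodule.mem_sup_left ⟨w, hw, rfl⟩
        · exact (hnil φ hφ).mono le_rfl le_sup_right)
    have i2 := ih (insert y B) (colonFam y W U) U hK hU
      (fun d w hw => ⟨hUW d hw, hU.smul_formPoly y hw⟩) hB'
      (by
        rintro φ (rfl | hφ)
        · refine ⟨1, fun d w hw => ?_⟩
          rw [pow_one]
          exact hw.2
        · exact (hnil φ hφ).mono (fun d => inf_le_left) le_rfl)
    have key : (1 - PowerSeries.X) * (HF W - HF U) =
        (HF W - HF (shiftFam y W ⊔ U)) -
          ((Polynomial.X : Polynomial ℤ) : PowerSeries ℤ) * (HF (colonFam y W U) - HF U) := by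
      rw [Polynomial.coe_X, sub_mul, one_mul]
      ext d
      cases d with
      | zero =>
        have : Module.finrank K ((shiftFam y W ⊔ U) 0) = Module.finrank K (U 0) :=
          congrArg (fun P : Submodule K _ => Module.finrank K P) (bot_sup_eq (U 0))
        simp only [map_sub, PowerSeries.coeff_zero_X_mul, HF, PowerSeries.coeff_mk, this]
      | succ d =>
        have h := finrank_colonFam hW hU y d
        simp only [map_sub, PowerSeries.coeff_succ_X_mul, HF, PowerSeries.coeff_mk]
        omega
    obtain ⟨P, hP⟩ := i1.sub (i2.poly_mul Polynomial.X)
    exact ⟨P, by rw [List.length_cons, pow_succ, mul_assoc, key, hP]⟩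

end HilbertSerre

/-! ### Alternating sums over a cube of graded modules -/

section Cube

variable {ι : Type*}

/-- Let `C ↦ W C / U C` be a system of graded modules indexed by finite sets of linear forms,
with maps `W (C ∪ {i}) / U (C ∪ {i}) → W C / U C` induced by inclusions, whose kernels and
cokernels are annihilated by powers of the form `i`, all modules being annihilated by powers of
the forms in `J`. If `J`, `s` and `r` further forms span the dual space, then the alternating
sum of the Hilbert series over the subsets of `s` has a pole of order at most `r` at `q = 1`,
as would the Hilbert series of a single module annihilated by powers of all forms in `J ∪ s`.
Each step of the induction replaces the system by its kernel and its cokernel in one direction,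
on which powers of the corresponding form vanish, and moves that form from `s` to `J`. -/
lemma cube_pole [Finite ι] (ys : List (Module.Dual K (Fin ℓ → K)))
    (s : Finset (Module.Dual K (Fin ℓ → K))) :
    ∀ (J : Set (Module.Dual K (Fin ℓ → K)))
      (W U : Finset (Module.Dual K (Fin ℓ → K)) →
        ℕ → Submodule K (ι → MvPolynomial (Fin ℓ) K)),
      (∀ C, IsGr (W C)) → (∀ C, IsGr (U C)) → (∀ C, U C ≤ W C) →
      (∀ i C, W (insert i C) ≤ W C) → (∀ i C, U (insert i C) ≤ U C) →
      (∀ i C, Nil i (W (insert i C) ⊓ U C) (U (insert i C))) →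
      (∀ i C, Nil i (W C) (W (insert i C) ⊔ U C)) →
      (∀ φ ∈ J, ∀ C, Nil φ (W C) (U C)) →
      Submodule.span K (J ∪ s ∪ {y | y ∈ ys}) = ⊤ →
      PoleLE ys.length (∑ C ∈ s.powerset, (-1) ^ C.card * (HF (W C) - HF (U C))) := by
  induction s using Finset.induction_on with
  | empty =>
    intro J W U hW hU hUW _ _ _ _ hJ hspan
    simpa using hilbert_serre ys J (W ∅) (U ∅) (hW _) (hU _) (hUW _) (by simpa using hspan)
      (fun φ hφ => hJ φ hφ ∅)
  | insert k s hk ih =>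
    intro J W U hW hU hUW hWm hUm hker hcok hJ hspan
    have hspan2 : Submodule.span K (insert k J ∪ s ∪ {y | y ∈ ys}) = ⊤ := by
      rw [← hspan]
      congr 1
      ext z
      simp only [Set.mem_union, Set.mem_insert_iff, Finset.coe_insert]
      tauto
    -- The cokernels `W C / (W (C ∪ {k}) + U C)` of the maps in direction `k`.
    have i1 := ih (insert k J) W (fun C => W (insert k C) ⊔ U C) hW
      (fun C => (hW _).sup (hU _)) (fun C => sup_le (hWm k C) (hUW C)) hWm
      (fun i C => sup_le_sup (by rw [Finset.insert_comm]; exact hWm i _) (hUm i C))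
      (fun i C => by
        obtain ⟨n, hn⟩ := hcok i (insert k C)
        obtain ⟨m, hm⟩ := hker i C
        refine ⟨n + m, fun d w hw => ?_⟩
        obtain ⟨hw1, hw2⟩ := hw
        obtain ⟨v, hv, u, hu, rfl⟩ := Submodule.mem_sup.mp hw2
        obtain ⟨v', hv', u', hu', he⟩ := Submodule.mem_sup.mp (hn d v hv)
        have h1 : u' + formPoly i ^ n • u ∈ (W (insert i C) ⊓ U C) (d + n) := by
          refine ⟨?_, ?_⟩
          · have : u' + formPoly i ^ n • u = formPoly i ^ n • (v + u) - v' := by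
              rw [smul_add, ← he]; abel
            rw [this]
            refine Submodule.sub_mem _ ((hW _).smul_formPoly_pow i n hw1) ?_
            rw [Finset.insert_comm] at hv'
            exact hWm k _ _ hv'
          · exact Submodule.add_mem _ (hUm k C _ hu') ((hU C).smul_formPoly_pow i n hu)
        have h2 : formPoly i ^ (n + m) • (v + u) =
            formPoly i ^ m • v' + formPoly i ^ m • (u' + formPoly i ^ n • u) := by
          rw [← smul_add, ← add_assoc, he, ← smul_add, smul_smul, ← pow_add, add_comm m]
        rw [h2, ← add_assoc]
        refine Submodule.add_mem_sup ?_ (hm _ _ h1)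
        rw [Finset.insert_comm] at hv'
        exact (hW _).smul_formPoly_pow i m hv')
      (fun i C => (hcok i C).mono le_rfl (sup_le_sup le_rfl le_sup_right))
      (by
        rintro φ (rfl | hφ) C
        · exact hcok _ C
        · exact (hJ φ hφ C).mono le_rfl le_sup_right)
      hspan2
    -- The kernels `(W (C ∪ {k}) ∩ U C) / U (C ∪ {k})` of the maps in direction `k`.
    have i2 := ih (insert k J) (fun C => W (insert k C) ⊓ U C) (fun C => U (insert k C))
      (fun C => (hW _).inf (hU _)) (fun C => hU _)
      (fun C => le_inf (hUW _) (hUm k C))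
      (fun i C => inf_le_inf (by rw [Finset.insert_comm]; exact hWm i _) (hUm i C))
      (fun i C => by rw [Finset.insert_comm]; exact hUm i _)
      (fun i C => by
        have h := hker i (insert k C)
        rw [Finset.insert_comm] at h
        exact h.mono (inf_le_inf inf_le_left le_rfl) le_rfl)
      (fun i C => by
        obtain ⟨n, hn⟩ := hcok i (insert k C)
        obtain ⟨m, hm⟩ := hker i C
        refine ⟨n + m, fun d w hw => ?_⟩
        obtain ⟨hw1, hw2⟩ := hw
        obtain ⟨v, hv, u, hu, he⟩ := Submodule.mem_sup.mp (hn d w hw1)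
        have hv1 := hv
        rw [Finset.insert_comm] at hv
        have h1 : v ∈ (W (insert i C) ⊓ U C) (d + n) := by
          refine ⟨hWm k _ _ hv, ?_⟩
          rw [eq_sub_of_add_eq he]
          exact Submodule.sub_mem _ ((hU C).smul_formPoly_pow i n hw2) (hUm k C _ hu)
        have h2 : formPoly i ^ (n + m) • w = formPoly i ^ m • v + formPoly i ^ m • u := by
          rw [← smul_add, he, smul_smul, ← pow_add, add_comm m]
        rw [h2, ← add_assoc]
        exact Submodule.add_mem_sup ⟨(hW _).smul_formPoly_pow i m hv, hm _ _ h1⟩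
          ((hU _).smul_formPoly_pow i m hu))
      (by
        rintro φ (rfl | hφ) C
        · exact hker _ C
        · exact (hJ φ hφ _).mono inf_le_left le_rfl)
      hspan2
    have key : ∑ C ∈ (insert k s).powerset, (-1) ^ C.card * (HF (W C) - HF (U C)) =
        ∑ C ∈ s.powerset, (-1) ^ C.card * (HF (W C) - HF (W (insert k C) ⊔ U C)) -
        ∑ C ∈ s.powerset, (-1) ^ C.card * (HF (W (insert k C) ⊓ U C) - HF (U (insert k C))) := by
      rw [Finset.sum_powerset_insert hk, ← Finset.sum_add_distrib, ← Finset.sum_sub_distrib]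
      refine Finset.sum_congr rfl fun C hC => ?_
      have hkC : k ∉ C := fun h => hk (Finset.mem_powerset.mp hC h)
      have hmod : HF (W (insert k C) ⊔ U C) + HF (W (insert k C) ⊓ U C) =
          HF (W (insert k C)) + HF (U C) := by
        ext d
        have := (hW (insert k C)).finiteDimensional d
        have := (hU C).finiteDimensional d
        have := Submodule.finrank_sup_add_finrank_inf_eq (W (insert k C) d) (U C d)
        simp only [HF, map_add, PowerSeries.coeff_mk, Pi.sup_apply, Pi.inf_apply]
        exact_mod_cast this
      rw [Finset.card_insert_of_notMem hkC, pow_succ]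
      linear_combination (-1) ^ C.card * hmod
    rw [key]
    exact i1.sub i2

end Cube

/-! ### Contraction and exterior product of multiderivations -/

section Derivations

variable {p : ℕ}

/-- Restriction of an alternating map to tuples of variables. -/
def evVars (p : ℕ) : ((MvPolynomial (Fin ℓ) K) [⋀^Fin p]→ₗ[K] (MvPolynomial (Fin ℓ) K)) →ₗ[K]
    ((Fin p → Fin ℓ) → MvPolynomial (Fin ℓ) K) where
  toFun θ v := θ fun j => X (v j)
  map_add' _ _ := rfl
  map_smul' _ _ := rfl

/-- A multiderivation is determined by its values on the variables. -/
lemma IsMultiDer.eq_zero {θ : (MvPolynomial (Fin ℓ) K) [⋀^Fin p]→ₗ[K] (MvPolynomial (Fin ℓ) K)}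
    (hθ : IsMultiDer θ) (h : evVars p θ = 0) : θ = 0 := by
  have key : ∀ (s : Finset (Fin p)) (v : Fin p → MvPolynomial (Fin ℓ) K),
      (∀ i ∉ s, ∃ j, v i = X j) → θ v = 0 := by
    intro s
    induction s using Finset.induction_on with
    | empty =>
      intro v hv
      choose j hj using fun i => hv i (Finset.notMem_empty i)
      obtain rfl : v = fun i => X (j i) := funext hj
      exact congrFun h j
    | insert a s ha ih =>
      intro v hv
      let D : Derivation K (MvPolynomial (Fin ℓ) K) (MvPolynomial (Fin ℓ) K) :=
        Derivation.mk' (θ.toMultilinearMap.toLinearMap v a) fun f g => hθ a v f g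
      have hD : D = 0 := by
        refine derivation_ext fun j => ?_
        change θ (Function.update v a (X j)) = 0
        refine ih _ fun i hi => ?_
        by_cases hia : i = a
        · subst hia
          exact ⟨j, by simp⟩
        · rw [Function.update_of_ne hia]
          exact hv i (by simp [hia, hi])
      have h1 : D (v a) = 0 := by rw [hD]; rfl
      change θ (Function.update v a (v a)) = 0 at h1
      rwa [Function.update_eq_self] at h1
  ext1 v
  exact key Finset.univ v fun i hi => absurd (Finset.mem_univ i) hi

lemma evVars_injOn {θ η : (MvPolynomial (Fin ℓ) K) [⋀^Fin p]→ₗ[K] (MvPolynomial (Fin ℓ) K)}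
    {A : MultiArr K ℓ} {d : ℕ} (hθ : θ ∈ DpGraded A p d) (hη : η ∈ DpGraded A p d)
    (h : evVars p θ = evVars p η) : θ = η := by
  have := (sub_mem hθ hη).1.1.eq_zero (by rw [map_sub, h, sub_self])
  exact sub_eq_zero.mp this

/-- The graded module `D^p(𝒜,m)`, embedded in a free module by its values on the variables. -/
def derFam (A : MultiArr K ℓ) (p : ℕ) :
    ℕ → Submodule K ((Fin p → Fin ℓ) → MvPolynomial (Fin ℓ) K) :=
  fun d => (DpGraded A p d).map (evVars p)

lemma DpGraded_smul {A : MultiArr K ℓ} {d e : ℕ}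
    {θ : (MvPolynomial (Fin ℓ) K) [⋀^Fin p]→ₗ[K] (MvPolynomial (Fin ℓ) K)}
    (hθ : θ ∈ DpGraded A p d) {s : MvPolynomial (Fin ℓ) K} (hs : s.IsHomogeneous e) :
    s • θ ∈ DpGraded A p (d + e) := by
  refine ⟨Submodule.smul_mem _ _ hθ.1, fun v => ?_⟩
  rw [add_comm d e]
  exact hs.mul (hθ.2 v)

lemma derFam_isGr (A : MultiArr K ℓ) (p : ℕ) : IsGr (derFam A p) where
  homog d w hw i := by
    obtain ⟨θ, hθ, rfl⟩ := hw
    exact hθ.2 i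
  step d w hw j := by
    obtain ⟨θ, hθ, rfl⟩ := hw
    exact ⟨_, DpGraded_smul hθ (isHomogeneous_X K j), rfl⟩

/-- The restriction of `evVars` to a graded piece of `D^p`, as an equivalence onto its image. -/
def evEquiv (A : MultiArr K ℓ) (p d : ℕ) : DpGraded A p d ≃ₗ[K] derFam A p d :=
  LinearEquiv.ofBijective
    (((evVars p).domRestrict (DpGraded A p d)).codRestrict (derFam A p d)
      fun θ => ⟨θ, θ.2, rfl⟩)
    ⟨fun θ η h => Subtype.ext (evVars_injOn θ.2 η.2 (congrArg Subtype.val h)), by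
      rintro ⟨_, θ, hθ, rfl⟩
      exact ⟨⟨θ, hθ⟩, rfl⟩⟩

lemma HF_derFam (A : MultiArr K ℓ) (p : ℕ) : HF (derFam A p) = hilb A p := by
  ext d
  simp only [HF, hilb, PowerSeries.coeff_mk, (evEquiv A p d).finrank_eq]

lemma DpGraded_finiteDimensional (A : MultiArr K ℓ) (p d : ℕ) :
    FiniteDimensional K (DpGraded A p d) := by
  have := (derFam_isGr A p).finiteDimensional d
  exact Module.Finite.equiv (evEquiv A p d).symm

/-- The elements of `D^p(𝒜,m)_d` which vanish as soon as one argument is a form in `Ys`. -/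
def kerD (A : MultiArr K ℓ) (Ys : Set (Module.Dual K (Fin ℓ → K))) (p d : ℕ) :
    Submodule K ((MvPolynomial (Fin ℓ) K) [⋀^Fin p]→ₗ[K] (MvPolynomial (Fin ℓ) K)) where
  carrier := {θ | θ ∈ DpGraded A p d ∧ ∀ y ∈ Ys, ∀ (v : Fin p → MvPolynomial (Fin ℓ) K) (i),
    v i = formPoly y → θ v = 0}
  add_mem' := fun ha hb => ⟨add_mem ha.1 hb.1, fun y hy v i hv => by
    simp [ha.2 y hy v i hv, hb.2 y hy v i hv]⟩
  zero_mem' := ⟨zero_mem _, fun y hy v i hv => rfl⟩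
  smul_mem' := fun c θ hθ => ⟨Submodule.smul_mem _ c hθ.1, fun y hy v i hv => by
    simp [hθ.2 y hy v i hv]⟩

/-- Contraction with the linear form `y`. -/
def contr (y : Module.Dual K (Fin ℓ → K)) (p : ℕ) :
    ((MvPolynomial (Fin ℓ) K) [⋀^Fin (p + 1)]→ₗ[K] (MvPolynomial (Fin ℓ) K)) →ₗ[K]
      ((MvPolynomial (Fin ℓ) K) [⋀^Fin p]→ₗ[K] (MvPolynomial (Fin ℓ) K)) where
  toFun θ := θ.curryLeft (formPoly y)
  map_add' _ _ := rfl
  map_smul' _ _ := rfl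

lemma contr_apply (y : Module.Dual K (Fin ℓ → K))
    (θ : (MvPolynomial (Fin ℓ) K) [⋀^Fin (p + 1)]→ₗ[K] (MvPolynomial (Fin ℓ) K))
    (v : Fin p → MvPolynomial (Fin ℓ) K) :
    contr y p θ v = θ (Matrix.vecCons (formPoly y) v) := rfl

lemma contr_mem {A : MultiArr K ℓ} {d : ℕ} (y : Module.Dual K (Fin ℓ → K))
    {θ : (MvPolynomial (Fin ℓ) K) [⋀^Fin (p + 1)]→ₗ[K] (MvPolynomial (Fin ℓ) K)}
    (hθ : θ ∈ DpGraded A (p + 1) d) : contr y p θ ∈ DpGraded A p d := by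
  refine ⟨⟨fun i v f g => ?_, fun φ hφ v i hv => ?_⟩, fun v => ?_⟩
  · have h := hθ.1.1 i.succ (Matrix.vecCons (formPoly y) v) f g
    simp only [contr_apply]
    simpa only [Matrix.vecCons, Fin.cons_update] using h
  · exact hθ.1.2 φ hφ (Matrix.vecCons (formPoly y) v) i.succ (by simpa using hv)
  · have h1 : contr y p θ (fun j => X (v j)) =
        ∑ i, C (y (Pi.single i 1)) *
          θ (Matrix.vecCons (X i) fun j => X (v j)) := by
      let L : MvPolynomial (Fin ℓ) K →ₗ[K] MvPolynomial (Fin ℓ) K :=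
        { toFun := fun f => θ.curryLeft f fun j => X (v j)
          map_add' := fun f g => by rw [map_add]; rfl
          map_smul' := fun c f => by rw [map_smul]; rfl }
      change L (∑ i, C (y (Pi.single i 1)) * X i) = _
      simp only [← smul_eq_C_mul, map_sum, map_smul]
      rfl
    rw [h1]
    refine IsHomogeneous.sum _ _ _ fun i _ => ?_
    have h2 : (Matrix.vecCons (X i) fun j => X (v j) : Fin (p + 1) → MvPolynomial (Fin ℓ) K) =
        fun j => X ((Fin.cons i v : Fin (p + 1) → Fin ℓ) j) := by
      funext j
      refine Fin.cases ?_ (fun j => ?_) j <;> simp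
    rw [h2]
    simpa using (isHomogeneous_C (Fin ℓ) (y (Pi.single i 1))).mul (hθ.2 (Fin.cons i v))

/-- The constant-coefficient derivation along the vector `v`. -/
def dirDer (v : Fin ℓ → K) : Derivation K (MvPolynomial (Fin ℓ) K) (MvPolynomial (Fin ℓ) K) :=
  mkDerivation K fun i => C (v i)

lemma dirDer_formPoly (v : Fin ℓ → K) (φ : Module.Dual K (Fin ℓ → K)) :
    dirDer v (formPoly φ) = C (φ v) := by
  have h : φ v = ∑ i, φ (Pi.single i 1) * v i := by
    conv_lhs => rw [pi_eq_sum_univ' v]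
    simp [map_sum, mul_comm]
  rw [h]
  simp [formPoly, dirDer, ← smul_eq_C_mul, mkDerivation_X]

/-- The exterior product of the derivation along `v` with `θ`. -/
def wedge (v : Fin ℓ → K)
    (θ : (MvPolynomial (Fin ℓ) K) [⋀^Fin p]→ₗ[K] (MvPolynomial (Fin ℓ) K)) :
    (MvPolynomial (Fin ℓ) K) [⋀^Fin (p + 1)]→ₗ[K] (MvPolynomial (Fin ℓ) K) :=
  AlternatingMap.alternatizeUncurryFin
    { toFun := fun f => dirDer v f • θ
      map_add' := fun f g => by rw [map_add, add_smul]
      map_smul' := fun c f => by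
        ext1 w
        change dirDer v (c • f) * θ w = c • (dirDer v f * θ w)
        rw [Derivation.map_smul, smul_mul_assoc] }

lemma wedge_apply (v : Fin ℓ → K)
    (θ : (MvPolynomial (Fin ℓ) K) [⋀^Fin p]→ₗ[K] (MvPolynomial (Fin ℓ) K))
    (w : Fin (p + 1) → MvPolynomial (Fin ℓ) K) :
    wedge v θ w = ∑ a : Fin (p + 1), (-1) ^ (a : ℕ) * (dirDer v (w a) * θ (a.removeNth w)) := by
  rw [wedge, AlternatingMap.alternatizeUncurryFin_apply]
  refine Finset.sum_congr rfl fun a _ => ?_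
  rw [zsmul_eq_mul]
  push_cast
  rfl

lemma wedge_mem {A : MultiArr K ℓ} {d : ℕ} {v : Fin ℓ → K} (hv : ∀ φ ∈ A.duals, φ v = 0)
    {θ : (MvPolynomial (Fin ℓ) K) [⋀^Fin p]→ₗ[K] (MvPolynomial (Fin ℓ) K)}
    (hθ : θ ∈ DpGraded A p d) : wedge v θ ∈ DpGraded A (p + 1) d := by
  refine ⟨⟨fun i w f g => ?_, fun φ hφ w i hw => ?_⟩, fun w => ?_⟩
  · simp only [wedge_apply, Finset.mul_sum, ← Finset.sum_add_distrib]
    refine Finset.sum_congr rfl fun a _ => ?_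
    by_cases hai : a = i
    · subst hai
      simp only [Function.update_self, Fin.removeNth_update, Derivation.leibniz, smul_eq_mul]
      ring
    · obtain ⟨j, rfl⟩ := Fin.exists_succAbove_eq (Ne.symm hai)
      simp only [Function.update_of_ne hai, Fin.removeNth_update_succAbove, hθ.1.1 j]
      ring
  · rw [wedge_apply]
    refine Ideal.sum_mem _ fun a _ => Ideal.mul_mem_left _ _ ?_
    by_cases hai : a = i
    · subst hai
      rw [hw, dirDer_formPoly, hv φ hφ, map_zero, zero_mul]
      exact Ideal.zero_mem _
    · obtain ⟨j, rfl⟩ := Fin.exists_succAbove_eq (Ne.symm hai)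
      exact Ideal.mul_mem_left _ _ (hθ.1.2 φ hφ _ j hw)
  · rw [wedge_apply]
    refine IsHomogeneous.sum _ _ _ fun a _ => ?_
    have h1 : ((-1) ^ (a : ℕ) : MvPolynomial (Fin ℓ) K).IsHomogeneous 0 := by
      have := isHomogeneous_C (Fin ℓ) ((-1 : K) ^ (a : ℕ))
      simpa using this
    have h2 := h1.mul ((isHomogeneous_C (Fin ℓ) (v (w a))).mul (hθ.2 fun j => w (a.succAbove j)))
    rw [zero_add, zero_add] at h2
    simp only [dirDer, mkDerivation_X]
    exact h2

/-- Splitting off one direction `v` in which the arrangement is constant: contraction with a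
form dual to `v` is surjective, a section being the exterior product with the derivation
along `v`. -/
lemma finrank_kerD_succ {A : MultiArr K ℓ} (Ys : Set (Module.Dual K (Fin ℓ → K)))
    {y : Module.Dual K (Fin ℓ → K)} {v : Fin ℓ → K} (hv : ∀ φ ∈ A.duals, φ v = 0)
    (hyv : y v = 1) (hYs : ∀ z ∈ Ys, z v = 0) (p d : ℕ) :
    Module.finrank K (kerD A Ys (p + 1) d) =
      Module.finrank K (kerD A (insert y Ys) (p + 1) d) +
        Module.finrank K (kerD A (insert y Ys) p d) := by
  have := DpGraded_finiteDimensional A (p + 1) d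
  have : FiniteDimensional K (kerD A Ys (p + 1) d) :=
    Submodule.finiteDimensional_of_le (S₂ := DpGraded A (p + 1) d) fun θ hθ => hθ.1
  have h := finrank_map_add (contr y p) (kerD A Ys (p + 1) d)
  have h1 : (kerD A Ys (p + 1) d).map (contr y p) = kerD A (insert y Ys) p d := by
    ext η
    constructor
    · rintro ⟨θ, hθ, rfl⟩
      refine ⟨contr_mem y hθ.1, ?_⟩
      rintro z (rfl | hz) w i hw
      · exact θ.map_eq_zero_of_eq (Matrix.vecCons (formPoly z) w) (i := 0) (j := i.succ)
          (by simpa using hw.symm) (Fin.succ_ne_zero i).symm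
      · exact hθ.2 z hz (Matrix.vecCons (formPoly y) w) i.succ (by simpa using hw)
    · intro hη
      refine ⟨wedge v η, ⟨wedge_mem hv hη.1, fun z hz w i hw => ?_⟩, ?_⟩
      · rw [wedge_apply]
        refine Finset.sum_eq_zero fun a _ => ?_
        by_cases hai : a = i
        · subst hai
          rw [hw, dirDer_formPoly, hYs z hz, map_zero, zero_mul, mul_zero]
        · obtain ⟨j, rfl⟩ := Fin.exists_succAbove_eq (Ne.symm hai)
          rw [hη.2 z (Set.mem_insert_of_mem _ hz) _ j hw, mul_zero, mul_zero]
      · ext1 w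
        rw [contr_apply, wedge_apply, Fin.sum_univ_succ, Finset.sum_eq_zero]
        · have : Fin.removeNth 0 (Matrix.vecCons (formPoly y) w) = w := by
            funext j; simp [Fin.removeNth]
          simp [this, dirDer_formPoly, hyv]
        · intro a _
          obtain ⟨j, hj⟩ := Fin.exists_succAbove_eq (x := 0) (y := a.succ)
            (Fin.succ_ne_zero a).symm
          rw [hη.2 y (Set.mem_insert _ _) _ j (by rw [Fin.removeNth, hj]; rfl),
            mul_zero, mul_zero]
  have h2 : kerD A Ys (p + 1) d ⊓ LinearMap.ker (contr y p) =
      kerD A (insert y Ys) (p + 1) d := by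
    ext θ
    constructor
    · rintro ⟨hθ, hker⟩
      refine ⟨hθ.1, ?_⟩
      rintro z (rfl | hz) w i hw
      · rw [← Fin.insertNth_self_removeNth i w, AlternatingMap.map_insertNth, hw, ← contr_apply,
          LinearMap.mem_ker.mp hker, AlternatingMap.zero_apply, smul_zero]
      · exact hθ.2 z hz w i hw
    · intro hθ
      refine ⟨⟨hθ.1, fun z hz => hθ.2 z (Set.mem_insert_of_mem _ hz)⟩, ?_⟩
      rw [SetLike.mem_coe, LinearMap.mem_ker]
      ext1 w
      exact hθ.2 y (Set.mem_insert _ _) _ 0 rfl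
  rw [h1, h2] at h
  omega

end Derivations

/-! ### Divisibility by powers of `t` -/

section Divisibility

/-- There are no nonzero `p`-derivations for `p > ℓ`. -/
lemma DpGraded_eq_zero_of_lt {A : MultiArr K ℓ} {p d : ℕ} (hp : ℓ < p)
    {θ : (MvPolynomial (Fin ℓ) K) [⋀^Fin p]→ₗ[K] (MvPolynomial (Fin ℓ) K)}
    (hθ : θ ∈ DpGraded A p d) : θ = 0 := by
  refine hθ.1.1.eq_zero ?_
  funext v
  obtain ⟨i, j, hij, h⟩ := Fintype.exists_ne_map_eq_of_card_lt v (by simpa using hp)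
  exact θ.map_eq_zero_of_eq (fun j => X (v j)) (by simp [h]) hij

/-- The analogue of `ψ(𝒜,m;t,q)` for multiderivations vanishing on the forms in `Ys`. -/
def psiKer (A : MultiArr K ℓ) (Ys : Set (Module.Dual K (Fin ℓ → K))) :
    Polynomial (PowerSeries ℤ) :=
  ∑ p ∈ Finset.range (ℓ + 1),
    Polynomial.C (PowerSeries.mk fun d => (Module.finrank K (kerD A Ys p d) : ℤ)) *
      (Polynomial.C ((PowerSeries.X : PowerSeries ℤ) - 1) * Polynomial.X - 1) ^ p

lemma psiKer_empty (A : MultiArr K ℓ) : psiKer A ∅ = psi A := by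
  have h : ∀ p d, kerD A ∅ p d = DpGraded A p d := fun p d => by
    ext θ
    exact ⟨fun h => h.1, fun h => ⟨h, fun y hy => absurd hy (Set.notMem_empty y)⟩⟩
  have h' : ∀ p d, Module.finrank K (kerD A ∅ p d) = Module.finrank K (DpGraded A p d) :=
    fun p d => by rw [h]
  simp only [psiKer, psi, hilb, h']

/-- Each direction in which the arrangement is constant contributes a factor `(q - 1) t`. -/
lemma psiKer_insert {A : MultiArr K ℓ} (Ys : Set (Module.Dual K (Fin ℓ → K)))
    {y : Module.Dual K (Fin ℓ → K)} {v : Fin ℓ → K} (hv : ∀ φ ∈ A.duals, φ v = 0)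
    (hyv : y v = 1) (hYs : ∀ z ∈ Ys, z v = 0) :
    psiKer A Ys = (Polynomial.C ((PowerSeries.X : PowerSeries ℤ) - 1) * Polynomial.X) *
      psiKer A (insert y Ys) := by
  set u : Polynomial (PowerSeries ℤ) :=
    Polynomial.C ((PowerSeries.X : PowerSeries ℤ) - 1) * Polynomial.X - 1 with hu
  have hu' : Polynomial.C ((PowerSeries.X : PowerSeries ℤ) - 1) * Polynomial.X = 1 + u := by
    rw [hu]; ring
  set h : ℕ → PowerSeries ℤ :=
    fun p => PowerSeries.mk fun d => (Module.finrank K (kerD A Ys p d) : ℤ) with hh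
  set h' : ℕ → PowerSeries ℤ :=
    fun p => PowerSeries.mk fun d => (Module.finrank K (kerD A (insert y Ys) p d) : ℤ) with hh'
  have hsucc : ∀ p, h (p + 1) = h' (p + 1) + h' p := fun p => by
    ext d
    simp only [hh, hh', map_add, PowerSeries.coeff_mk]
    exact_mod_cast finrank_kerD_succ Ys hv hyv hYs p d
  have hzero : h 0 = h' 0 := by
    ext d
    have : kerD A Ys 0 d = kerD A (insert y Ys) 0 d := by
      ext θ
      exact ⟨fun h => ⟨h.1, fun _ _ _ i => i.elim0⟩, fun h => ⟨h.1, fun _ _ _ i => i.elim0⟩⟩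
    simp only [hh, hh', PowerSeries.coeff_mk]
    rw [this]
  have htop : h' ℓ = 0 := by
    ext d
    have h1 := finrank_kerD_succ Ys hv hyv hYs ℓ d
    have h2 : kerD A Ys (ℓ + 1) d = ⊥ :=
      (Submodule.eq_bot_iff _).mpr fun θ hθ => DpGraded_eq_zero_of_lt ℓ.lt_succ_self hθ.1
    rw [h2, finrank_bot] at h1
    simp only [hh', PowerSeries.coeff_mk, map_zero]
    omega
  change ∑ p ∈ Finset.range (ℓ + 1), Polynomial.C (h p) * u ^ p =
    (Polynomial.C ((PowerSeries.X : PowerSeries ℤ) - 1) * Polynomial.X) *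
      ∑ p ∈ Finset.range (ℓ + 1), Polynomial.C (h' p) * u ^ p
  have e1 : ∑ p ∈ Finset.range (ℓ + 1), Polynomial.C (h' p) * u ^ p =
      ∑ p ∈ Finset.range ℓ, Polynomial.C (h' p) * u ^ p := by
    rw [Finset.sum_range_succ, htop, map_zero, zero_mul, add_zero]
  rw [hu', add_mul, one_mul]
  nth_rewrite 2 [e1]
  rw [Finset.sum_range_succ', Finset.sum_range_succ' _ ℓ, Finset.mul_sum, hzero,
    add_right_comm, ← Finset.sum_add_distrib]
  congr 1
  refine Finset.sum_congr rfl fun p _ => ?_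
  rw [hsucc, map_add]
  ring

/-- A basis `v` of the subspace `Y`, and linear functionals on the whole space restricting to
the dual basis of `Y`. -/
lemma exists_dual_vectors (Y : Submodule K (Fin ℓ → K)) :
    ∃ (v : Fin (Module.finrank K Y) → Fin ℓ → K)
      (y : Fin (Module.finrank K Y) → Module.Dual K (Fin ℓ → K)),
      (∀ k, v k ∈ Y) ∧ (∀ j k, y j (v k) = if k = j then 1 else 0) ∧
      ∀ f : Module.Dual K (Fin ℓ → K), (∀ k, f (v k) = 0) → Y ≤ LinearMap.ker f := by
  let b := Module.finBasis K Y
  choose y hy using fun j => LinearMap.exists_extend (b.coord j)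
  refine ⟨fun k => b k, y, fun k => (b k).2, fun j k => ?_, fun f hf w hw => ?_⟩
  · have := LinearMap.congr_fun (hy j) (b k)
    rw [LinearMap.comp_apply, Submodule.subtype_apply, Module.Basis.coord_apply,
      b.repr_self, Finsupp.single_apply] at this
    exact this
  · have h : f ∘ₗ Y.subtype = 0 := b.ext fun k => hf k
    exact LinearMap.congr_fun h ⟨w, hw⟩

/-- If all hyperplanes of `𝒜` contain `Y`, then `ψ(𝒜,m;t,q)` is divisible by `t ^ dim Y`. -/
lemma psi_coeff_eq_zero {A : MultiArr K ℓ} {Y : Submodule K (Fin ℓ → K)}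
    (hY : ∀ φ ∈ A.duals, Y ≤ LinearMap.ker φ) {k : ℕ} (hk : k < Module.finrank K Y) :
    (psi A).coeff k = 0 := by
  obtain ⟨v, y, hv, hyv, -⟩ := exists_dual_vectors Y
  have key : ∀ s : Finset (Fin (Module.finrank K Y)), psi A =
      (Polynomial.C ((PowerSeries.X : PowerSeries ℤ) - 1) * Polynomial.X) ^ s.card *
        psiKer A (y '' s) := by
    intro s
    induction s using Finset.induction_on with
    | empty => simp [psiKer_empty]
    | insert a s ha ih =>
      have hs : ∀ z ∈ y '' s, z (v a) = 0 := by
        rintro _ ⟨j, hj, rfl⟩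
        rw [hyv, if_neg]
        rintro rfl
        exact ha hj
      rw [ih, psiKer_insert (y '' s) (fun φ hφ => hY φ hφ (hv a)) (by rw [hyv, if_pos rfl]) hs,
        Finset.card_insert_of_notMem ha, Finset.coe_insert, Set.image_insert_eq]
      ring
  have h := key Finset.univ
  rw [Finset.card_univ, Fintype.card_fin, mul_pow] at h
  refine Polynomial.X_pow_dvd_iff.mp ?_ k hk
  rw [h]
  exact Dvd.dvd.mul_right (Dvd.intro_left _ rfl) _

end Divisibility

/-! ### Local contributions and their poles -/

section Local

/-- The subarrangement of `𝒜` of the hyperplanes with defining functional in `C`. -/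
def subArr (A : MultiArr K ℓ) (C : Finset (Module.Dual K (Fin ℓ → K))) : MultiArr K ℓ where
  duals := A.duals.filter (· ∈ C)
  ne_zero := fun φ hφ => A.ne_zero φ (Finset.mem_filter.mp hφ).1
  distinct_ker := fun φ hφ ψ hψ =>
    A.distinct_ker φ (Finset.mem_filter.mp hφ).1 ψ (Finset.mem_filter.mp hψ).1
  mult := A.mult
  mult_pos := fun φ hφ => A.mult_pos φ (Finset.mem_filter.mp hφ).1

lemma restrictArr_eq_subArr (A : MultiArr K ℓ) (Y : Submodule K (Fin ℓ → K)) :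
    restrictArr A Y = subArr A (A.duals.filter fun φ => Y ≤ LinearMap.ker φ) := by
  have h : A.duals.filter (fun φ => Y ≤ LinearMap.ker φ) =
      A.duals.filter (· ∈ A.duals.filter fun φ => Y ≤ LinearMap.ker φ) := by
    ext φ
    simp only [Finset.mem_filter]
    tauto
  simp only [restrictArr, subArr, MultiArr.mk.injEq, and_true]
  exact h

/-- Alternating sum of `g` over the Boolean lattice of subsets of `B`. -/
def boolDiff {α : Type*} (g : Finset α → PowerSeries ℤ) (B : Finset α) : PowerSeries ℤ :=
  ∑ C ∈ B.powerset, (-1) ^ (B.card + C.card) * g C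

lemma boolDiff_insert {α : Type*} (g : Finset α → PowerSeries ℤ) {a : α} {B : Finset α}
    (ha : a ∉ B) :
    boolDiff g (insert a B) = boolDiff (fun C => g (insert a C)) B - boolDiff g B := by
  rw [boolDiff, Finset.sum_powerset_insert ha, boolDiff, boolDiff, add_comm, sub_eq_add_neg,
    ← Finset.sum_neg_distrib]
  congr 1 <;> refine Finset.sum_congr rfl fun C hC => ?_
  · rw [Finset.card_insert_of_notMem ha,
      Finset.card_insert_of_notMem fun h => ha (Finset.mem_powerset.mp hC h)]
    ring
  · rw [Finset.card_insert_of_notMem ha]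
    ring

/-- Möbius inversion on the Boolean lattice. -/
lemma sum_boolDiff {α : Type*} (g : Finset α → PowerSeries ℤ) (B : Finset α) :
    ∑ B' ∈ B.powerset, boolDiff g B' = g B := by
  induction B using Finset.induction_on generalizing g with
  | empty => simp [boolDiff]
  | insert a B ha ih =>
    rw [Finset.sum_powerset_insert ha, ← ih fun C => g (insert a C), ← Finset.sum_add_distrib]
    refine Finset.sum_congr rfl fun C hC => ?_
    rw [boolDiff_insert g fun h => ha (Finset.mem_powerset.mp hC h)]
    ring

/-- The alternating sum of the Hilbert series of `D^p` over the subarrangements of `B` has a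
pole of order at most the dimension of the intersection of the hyperplanes in `B`. -/
lemma boolDiff_hilb_pole (A : MultiArr K ℓ) (p : ℕ) (B : Finset (Module.Dual K (Fin ℓ → K))) :
    PoleLE (Module.finrank K (⨅ φ ∈ B, LinearMap.ker φ : Submodule K (Fin ℓ → K)))
      (boolDiff (fun C => hilb (subArr A C) p) B) := by
  set Z : Submodule K (Fin ℓ → K) := ⨅ φ ∈ B, LinearMap.ker φ with hZ
  obtain ⟨v, y, hv, hyv, hker⟩ := exists_dual_vectors Z
  have hspan : Submodule.span K
      ((∅ : Set (Module.Dual K (Fin ℓ → K))) ∪ B ∪ {z | z ∈ List.ofFn y}) = ⊤ := by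
    rw [eq_top_iff]
    rintro f -
    -- Subtracting a combination of the `y j` makes `f` vanish on `Z`.
    have h1 : Z ≤ LinearMap.ker (f - ∑ j, f (v j) • y j) := by
      refine hker _ fun k => ?_
      simp [hyv]
    have h2 : f - ∑ j, f (v j) • y j ∈ Submodule.span K (B : Set (Module.Dual K (Fin ℓ → K))) := by
      have h3 := mem_span_of_iInf_ker_le_ker (L := fun φ : B => (φ : Module.Dual K (Fin ℓ → K)))
        (K := f - ∑ j, f (v j) • y j) (by
          refine le_trans (le_of_eq ?_) h1
          rw [hZ, iInf_subtype])
      simpa using h3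
    have h4 : f = (f - ∑ j, f (v j) • y j) + ∑ j, f (v j) • y j := by abel
    rw [h4]
    refine add_mem (Submodule.span_mono (fun z hz => Or.inl (Or.inr hz)) h2)
      (sum_mem fun j _ => Submodule.smul_mem _ _ (Submodule.subset_span (Or.inr ?_)))
    exact (List.mem_ofFn' y (y j)).mpr ⟨j, rfl⟩
  have hmono : ∀ i C, derFam (subArr A (insert i C)) p ≤ derFam (subArr A C) p := by
    intro i C d
    refine Submodule.map_mono fun θ hθ => ⟨⟨hθ.1.1, fun φ hφ => hθ.1.2 φ ?_⟩, hθ.2⟩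
    exact Finset.mem_filter.mpr ⟨(Finset.mem_filter.mp hφ).1,
      Finset.mem_insert_of_mem (Finset.mem_filter.mp hφ).2⟩
  have hnil : ∀ i C, Nil i (derFam (subArr A C) p) (derFam (subArr A (insert i C)) p) := by
    intro i C
    refine ⟨A.mult i, ?_⟩
    rintro d _ ⟨θ, hθ, rfl⟩
    have h0 := DpGraded_smul hθ ((formPoly_isHomogeneous i).pow (A.mult i))
    rw [one_mul] at h0
    refine ⟨formPoly i ^ A.mult i • θ, ⟨⟨h0.1.1, fun φ hφ w j hw => ?_⟩, h0.2⟩, rfl⟩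
    rcases Finset.mem_insert.mp (Finset.mem_filter.mp hφ).2 with rfl | hC
    · exact Ideal.mul_mem_right _ _ (Ideal.mem_span_singleton_self _)
    · exact h0.1.2 φ (Finset.mem_filter.mpr ⟨(Finset.mem_filter.mp hφ).1, hC⟩) w j hw
  have h := cube_pole (ι := Fin p → Fin ℓ) (List.ofFn y) B ∅ (fun C => derFam (subArr A C) p)
    (fun _ => ⊥) (fun C => derFam_isGr _ p)
    (fun C => ⟨fun d w hw i => by
        rw [(Submodule.mem_bot K).mp hw]; exact isHomogeneous_zero _ _ _,
      fun d w hw j => by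
        rw [(Submodule.mem_bot K).mp hw, smul_zero]; exact zero_mem _⟩)
    (fun C => bot_le) hmono (fun _ _ => le_rfl)
    (fun i C => ⟨0, fun d w hw => by
      rw [(Submodule.mem_bot K).mp hw.2, smul_zero]; exact zero_mem _⟩)
    (fun i C => by rw [sup_bot_eq]; exact hnil i C)
    (fun φ hφ => absurd hφ (Set.notMem_empty φ)) hspan
  rw [List.length_ofFn] at h
  have h0 : HF (⊥ : ℕ → Submodule K ((Fin p → Fin ℓ) → MvPolynomial (Fin ℓ) K)) = 0 := by
    ext d
    simp only [HF, PowerSeries.coeff_mk, Pi.bot_apply, finrank_bot, Nat.cast_zero, map_zero]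
  have h1 := h.poly_mul ((-1) ^ B.card)
  convert h1 using 1
  rw [boolDiff, Finset.mul_sum]
  refine Finset.sum_congr rfl fun C _ => ?_
  rw [HF_derFam, h0, sub_zero, pow_add, mul_assoc]
  simp [Polynomial.coe_pow]

/-- The contribution of `Z ∈ L(𝒜)` to the Hilbert series of `D^p`. -/
def localHilb (A : MultiArr K ℓ) (p : ℕ) (Z : Submodule K (Fin ℓ → K)) : PowerSeries ℤ :=
  ∑ B ∈ A.duals.powerset.filter (fun B => ⨅ φ ∈ B, LinearMap.ker φ = Z),
    boolDiff (fun C => hilb (subArr A C) p) B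

lemma localHilb_pole (A : MultiArr K ℓ) (p : ℕ) (Z : Submodule K (Fin ℓ → K)) :
    PoleLE (Module.finrank K Z) (localHilb A p Z) := by
  refine PoleLE.sum fun B hB => ?_
  have h := boolDiff_hilb_pole A p B
  rwa [(Finset.mem_filter.mp hB).2] at h

lemma hilb_restrictArr (A : MultiArr K ℓ) (Y : Submodule K (Fin ℓ → K)) (p : ℕ) :
    hilb (restrictArr A Y) p = ∑ Z ∈ (LSet A).filter (fun Z => Y ≤ Z), localHilb A p Z := by
  rw [restrictArr_eq_subArr, ← sum_boolDiff (fun C => hilb (subArr A C) p)]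
  have hmem : ∀ B : Finset (Module.Dual K (Fin ℓ → K)),
      B ∈ (A.duals.filter fun φ => Y ≤ LinearMap.ker φ).powerset ↔
        B ∈ A.duals.powerset ∧ Y ≤ ⨅ φ ∈ B, LinearMap.ker φ := by
    intro B
    simp only [Finset.mem_powerset, le_iInf_iff, Finset.subset_iff, Finset.mem_filter]
    exact ⟨fun h => ⟨fun φ hφ => (h hφ).1, fun φ hφ => (h hφ).2⟩,
      fun h φ hφ => ⟨h.1 hφ, h.2 φ hφ⟩⟩
  rw [← Finset.sum_fiberwise_of_maps_to (t := (LSet A).filter fun Z => Y ≤ Z)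
    (g := fun B => ⨅ φ ∈ B, LinearMap.ker φ)]
  · refine Finset.sum_congr rfl fun Z hZ => ?_
    refine Finset.sum_congr ?_ fun _ _ => rfl
    ext B
    rw [Finset.mem_filter, Finset.mem_filter, hmem]
    refine ⟨fun h => ⟨h.1.1, h.2⟩, fun h => ⟨⟨h.1, ?_⟩, h.2⟩⟩
    rw [h.2]
    exact (Finset.mem_filter.mp hZ).2
  · intro B hB
    have := (hmem B).mp hB
    exact Finset.mem_filter.mpr ⟨Finset.mem_image.mpr ⟨B, this.1, rfl⟩, this.2⟩

end Local

/-! ### Inversion on the intersection lattice -/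

section Finish

/-- The coefficient of `t ^ k` in `(t (q - 1) - 1) ^ p` is an integer multiple of
`(1 - q) ^ k`. -/
lemma coeff_u_pow (p k : ℕ) : ∃ n : ℤ,
    ((Polynomial.C ((PowerSeries.X : PowerSeries ℤ) - 1) * Polynomial.X - 1) ^ p).coeff k =
      (n : PowerSeries ℤ) * (1 - PowerSeries.X) ^ k := by
  refine ⟨((Polynomial.X - 1 : Polynomial ℤ) ^ p).coeff k * (-1) ^ k, ?_⟩
  have h : (Polynomial.C ((PowerSeries.X : PowerSeries ℤ) - 1) * Polynomial.X - 1) ^ p =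
      (((Polynomial.X - 1 : Polynomial ℤ) ^ p).map (Int.castRingHom (PowerSeries ℤ))).comp
        (Polynomial.C ((PowerSeries.X : PowerSeries ℤ) - 1) * Polynomial.X) := by
    simp
  rw [h, Polynomial.comp_C_mul_X_coeff, Polynomial.coeff_map,
    show (PowerSeries.X : PowerSeries ℤ) - 1 = -1 * (1 - PowerSeries.X) by ring, mul_pow,
    eq_intCast, Int.cast_mul, Int.cast_pow, Int.cast_neg, Int.cast_one, mul_assoc]

/-- The contribution of `Z ∈ L(𝒜)` to the coefficient of `t ^ k` in `ψ(𝒜,m;t,q)`. -/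
def localPsi (A : MultiArr K ℓ) (k : ℕ) (Z : Submodule K (Fin ℓ → K)) : PowerSeries ℤ :=
  ∑ p ∈ Finset.range (ℓ + 1), localHilb A p Z *
    ((Polynomial.C ((PowerSeries.X : PowerSeries ℤ) - 1) * Polynomial.X - 1) ^ p).coeff k

lemma psi_restrictArr_coeff (A : MultiArr K ℓ) (Y : Submodule K (Fin ℓ → K)) (k : ℕ) :
    (psi (restrictArr A Y)).coeff k =
      ∑ Z ∈ (LSet A).filter (fun Z => Y ≤ Z), localPsi A k Z := by
  simp only [psi, localPsi, Polynomial.finsetSum_coeff, Polynomial.coeff_C_mul,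
    hilb_restrictArr, Finset.sum_mul]
  exact Finset.sum_comm

lemma localPsi_of_le (A : MultiArr K ℓ) {k : ℕ} {Z : Submodule K (Fin ℓ → K)}
    (hk : Module.finrank K Z ≤ k) :
    ∃ Q : Polynomial ℤ, localPsi A k Z =
      (((1 - Polynomial.X) ^ (k - Module.finrank K Z) * Q : Polynomial ℤ) : PowerSeries ℤ) := by
  choose n hn using fun p => coeff_u_pow p k
  choose Q hQ using fun p => localHilb_pole A p Z
  refine ⟨∑ p ∈ Finset.range (ℓ + 1), Polynomial.C (n p) * Q p, ?_⟩
  rw [Finset.mul_sum, localPsi, ← Polynomial.coeToPowerSeries.ringHom_apply, map_sum]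
  refine Finset.sum_congr rfl fun p _ => ?_
  rw [hn, map_mul, map_mul, Polynomial.coeToPowerSeries.ringHom_apply (φ := Q p), ← hQ,
    ← Nat.sub_add_cancel hk, pow_add, Nat.add_sub_cancel]
  simp
  ring

/-- Möbius inversion on `L(𝒜)`. -/
lemma moebius_inversion {R : Type*} [CommRing R] (A : MultiArr K ℓ)
    {μ : Submodule K (Fin ℓ → K) → Submodule K (Fin ℓ → K) → ℤ}
    (hμ : ∀ X' ∈ LSet A, ∀ Y ∈ LSet A, X' ≤ Y →
      (∑ Z ∈ (LSet A).filter (fun Z => X' ≤ Z ∧ Z ≤ Y), μ Z X') =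
        if Y = X' then 1 else 0)
    {X : Submodule K (Fin ℓ → K)} (hX : X ∈ LSet A) (c G : Submodule K (Fin ℓ → K) → R)
    (hG : ∀ Y, G Y = ∑ Z ∈ (LSet A).filter (fun Z => Y ≤ Z), c Z) :
    ∑ Y ∈ (LSet A).filter (fun Y => X ≤ Y), (μ Y X : R) * G Y = c X := by
  have h1 : ∑ Y ∈ (LSet A).filter (fun Y => X ≤ Y), (μ Y X : R) * G Y =
      ∑ Z ∈ (LSet A).filter (fun Z => X ≤ Z),
        ∑ Y ∈ (LSet A).filter (fun Y => X ≤ Y ∧ Y ≤ Z), (μ Y X : R) * c Z := by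
    simp only [hG, Finset.mul_sum]
    refine Finset.sum_comm' fun Y Z => ?_
    simp only [Finset.mem_filter]
    exact ⟨fun h => ⟨⟨h.1.1, h.1.2, h.2.2⟩, h.2.1, h.1.2.trans h.2.2⟩,
      fun h => ⟨⟨h.1.1, h.1.2.1⟩, h.2.1, h.1.2.2⟩⟩
  rw [h1, Finset.sum_eq_single_of_mem X (Finset.mem_filter.mpr ⟨hX, le_rfl⟩)]
  · rw [← Finset.sum_mul, ← Int.cast_sum, hμ X hX X hX le_rfl, if_pos rfl, Int.cast_one, one_mul]
  · intro Z hZ hne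
    rw [← Finset.sum_mul, ← Int.cast_sum, hμ X hX Z (Finset.mem_filter.mp hZ).1
      (Finset.mem_filter.mp hZ).2, if_neg hne, Int.cast_zero, zero_mul]

/-- Below the dimension of `X` the local contribution vanishes, by divisibility of
`ψ(𝒜_Y,m_Y;t,q)` by `t ^ dim Y` for all `Y ⊇ X`. -/
lemma localPsi_of_lt (A : MultiArr K ℓ)
    {μ : Submodule K (Fin ℓ → K) → Submodule K (Fin ℓ → K) → ℤ}
    (hμ : ∀ X' ∈ LSet A, ∀ Y ∈ LSet A, X' ≤ Y →
      (∑ Z ∈ (LSet A).filter (fun Z => X' ≤ Z ∧ Z ≤ Y), μ Z X') =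
        if Y = X' then 1 else 0)
    {X : Submodule K (Fin ℓ → K)} (hX : X ∈ LSet A) {k : ℕ} (hk : k < Module.finrank K X) :
    localPsi A k X = 0 := by
  rw [← moebius_inversion A hμ hX (localPsi A k) (fun Y => (psi (restrictArr A Y)).coeff k)
    fun Y => psi_restrictArr_coeff A Y k]
  refine Finset.sum_eq_zero fun Y hY => ?_
  rw [psi_coeff_eq_zero (Y := Y) (fun φ hφ => by
      have h : φ ∈ A.duals.filter (fun φ => Y ≤ LinearMap.ker φ) := hφ
      exact (Finset.mem_filter.mp h).2)
    (hk.trans_le (Submodule.finrank_mono (Finset.mem_filter.mp hY).2)), mul_zero]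

/-- Each coefficient of `ψ(𝒜_Y,m_Y;t,1)` is the sum of local contributions over the elements of
`L(𝒜)` containing `Y`, and `Z` contributes to the coefficient of `t ^ dim Z` only. -/
lemma exists_local (A : MultiArr K ℓ)
    {μ : Submodule K (Fin ℓ → K) → Submodule K (Fin ℓ → K) → ℤ}
    (hμ : ∀ X' ∈ LSet A, ∀ Y ∈ LSet A, X' ≤ Y →
      (∑ Z ∈ (LSet A).filter (fun Z => X' ≤ Z ∧ Z ≤ Y), μ Z X') =
        if Y = X' then 1 else 0) (k : ℕ) :
    ∃ c : Submodule K (Fin ℓ → K) → ℤ,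
      (∀ Z ∈ LSet A, k ≠ Module.finrank K Z → c Z = 0) ∧
      ∀ Y, psiAtOne (restrictArr A Y) k = ∑ Z ∈ (LSet A).filter (fun Z => Y ≤ Z), c Z := by
  have h : ∀ Z : Submodule K (Fin ℓ → K), ∃ P : Polynomial ℤ, Z ∈ LSet A →
      localPsi A k Z = (P : PowerSeries ℤ) ∧ (k ≠ Module.finrank K Z → P.eval 1 = 0) := by
    intro Z
    rcases lt_or_ge k (Module.finrank K Z) with hk | hk
    · exact ⟨0, fun hZ => ⟨by rw [localPsi_of_lt A hμ hZ hk, Polynomial.coe_zero],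
        fun _ => Polynomial.eval_zero⟩⟩
    · obtain ⟨Q, hQ⟩ := localPsi_of_le A hk
      refine ⟨_, fun _ => ⟨hQ, fun hne => ?_⟩⟩
      rw [Polynomial.eval_mul, Polynomial.eval_pow, Polynomial.eval_sub, Polynomial.eval_one,
        Polynomial.eval_X, sub_self, zero_pow (by omega), zero_mul]
  choose P hP using h
  refine ⟨fun Z => (P Z).eval 1, fun Z hZ => (hP Z hZ).2, fun Y => ?_⟩
  have h1 : Polynomial.coeToPowerSeries.ringHom
      (∑ Z ∈ (LSet A).filter (fun Z => Y ≤ Z), P Z) = (psi (restrictArr A Y)).coeff k := by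
    rw [psi_restrictArr_coeff, map_sum]
    exact Finset.sum_congr rfl fun Z hZ => (hP Z (Finset.mem_filter.mp hZ).1).1.symm
  have h2 : psiQCoeff (restrictArr A Y) k = ∑ Z ∈ (LSet A).filter (fun Z => Y ≤ Z), P Z := by
    have hex : ∃ f : Polynomial ℤ, Polynomial.coeToPowerSeries.ringHom f =
      (psi (restrictArr A Y)).coeff k := ⟨_, h1⟩
    rw [psiQCoeff, dif_pos hex]
    exact Polynomial.coe_injective ℤ (hex.choose_spec.trans h1.symm)
  rw [psiAtOne, h2, Polynomial.eval_finsetSum]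

end Finish

/-- With `μ` the Möbius function of `L(𝒜)` (ordered by reverse inclusion),
`ψ_X(𝒜,m;t,1) = Σ_{Y ≤ X} μ(Y,X)·ψ(𝒜_Y,m_Y;−t,1)` is the monomial
`C_{r(X)}(X)·t^{dim X}`. -/
theorem psiX_eq_monomial (A : MultiArr K ℓ) (X : Submodule K (Fin ℓ → K))
    (hX : X ∈ LSet A)
    (μ : Submodule K (Fin ℓ → K) → Submodule K (Fin ℓ → K) → ℤ)
    (hμ : ∀ X' ∈ LSet A, ∀ Y ∈ LSet A, X' ≤ Y →
      (∑ Z ∈ (LSet A).filter (fun Z => X' ≤ Z ∧ Z ≤ Y), μ Z X') =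
        if Y = X' then 1 else 0) :
    ∑ Y ∈ (LSet A).filter (fun Y => X ≤ Y),
        μ Y X • (psiT1Poly (restrictArr A Y)).comp (-Polynomial.X) =
      Polynomial.C (CpCoeff (restrictArr A X) (rk X)) *
        Polynomial.X ^ (Module.finrank K X) := by
  choose c hc0 hc using fun k => exists_local A hμ k
  have hle : Module.finrank K X ≤ ℓ := by
    simpa using Submodule.finrank_le X
  have hcX : psiAtOne (restrictArr A X) (Module.finrank K X) = c (Module.finrank K X) X := by
    rw [hc, Finset.sum_eq_single_of_mem X (Finset.mem_filter.mpr ⟨hX, le_rfl⟩)]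
    intro Z hZ hne
    refine hc0 _ Z (Finset.mem_filter.mp hZ).1 (ne_of_lt ?_)
    exact Submodule.finrank_lt_finrank_of_lt
      (lt_of_le_of_ne (Finset.mem_filter.mp hZ).2 (Ne.symm hne))
  have hC : CpCoeff (restrictArr A X) (rk X) =
      (-1) ^ Module.finrank K X * c (Module.finrank K X) X := by
    rw [CpCoeff, rk, Nat.sub_sub_self hle, hcX]
  have hsum : ∑ Y ∈ (LSet A).filter (fun Y => X ≤ Y),
        μ Y X • (psiT1Poly (restrictArr A Y)).comp (-Polynomial.X) =
      ∑ k ∈ Finset.range (ℓ + 1), Polynomial.C (c k X) * (-Polynomial.X) ^ k := by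
    have h1 : ∀ Y, μ Y X • (psiT1Poly (restrictArr A Y)).comp (-Polynomial.X) =
        ∑ k ∈ Finset.range (ℓ + 1),
          Polynomial.C (μ Y X * psiAtOne (restrictArr A Y) k) * (-Polynomial.X) ^ k := by
      intro Y
      rw [psiT1Poly, Polynomial.sum_comp, Finset.smul_sum]
      refine Finset.sum_congr rfl fun k _ => ?_
      simp [Polynomial.smul_eq_C_mul, mul_assoc]
    rw [Finset.sum_congr rfl fun Y _ => h1 Y, Finset.sum_comm]
    refine Finset.sum_congr rfl fun k _ => ?_
    rw [← Finset.sum_mul, ← map_sum]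
    congr 2
    exact moebius_inversion A hμ hX (c k) (fun Y => psiAtOne (restrictArr A Y) k) (hc k)
  rw [hsum, hC, Finset.sum_eq_single_of_mem (Module.finrank K X)
    (Finset.mem_range.mpr (Nat.lt_succ_of_le hle))]
  · rw [neg_pow, map_mul, map_pow, map_neg, map_one]
    ring
  · intro k _ hk
    rw [hc0 k X hX hk, map_zero, zero_mul]
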